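/- arXiv:2406.09048 — 2 statements merged into one kernel-verified Lean document; each statement's English description precedes it below -/
import Mathlib

section
/- Let d ≥ 1, m₀ ∈ ℝ^d, σ₀ > 0, g(ρ) = log(1 + e^ρ), and define D : ℝ^d × ℝ → ℝ by D(m, ρ) = ‖m − m₀‖²/(2σ₀²) + (d/2)(g(ρ)²/σ₀² − 1) + (d/2)·log(σ₀²/g(ρ)²). Then D is infinitely differentiable; there exists a constant C > 0 such that for all θ = (m, ρ) ∈ ℝ^{d+1}, ‖∇D(θ)‖ ≤ C(1 + ‖θ‖); and for every integer n ≥ 2 there exists a constant C_n > 0 such that the n-th iterated derivative of D satisfies ‖D^{(n)}(θ)‖ ≤ C_n for all θ ∈ ℝ^{d+1}. -/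
/-!
The function splits as `D(m, ρ) = ‖m - m₀‖² / (2σ₀²) + h(ρ)`. The first summand has constant second
derivative, so everything reduces to showing that `h` has bounded derivatives of all orders `≥ 2`.

The key is the autonomous equation `g' = 1 - e^{-g}` satisfied by the softplus `g`. It follows that
the three functions `u = e^{-g}`, `p = g e^{-g}`, `r = (1 - e^{-g}) / g` solve a closed polynomial
system
`u' = -u (1 - u)`, `p' = (1 - u) (u - p)`, `r' = u r - r²`.
As `g > 0`, all three take values in `[0, 1]`; hence every element of the algebra they generate is
bounded and has its derivative in the same algebra (`softplusAlgebra_closed`), so all its iterated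
derivatives are bounded. Since `(log g)' = r` and `(g²)'' = 2 (1 - u)² + 2 p (1 - u)`, the second
derivative of `h` lies in this algebra.

The linear growth of the gradient follows from the boundedness of the second derivative by the mean
value inequality.
-/

open MeasureTheory

/-- The softplus function `g(ρ) = log(1 + e^ρ)`. -/
noncomputable def softplus (ρ : ℝ) : ℝ := Real.log (1 + Real.exp ρ)

/-! ### The softplus function and its differential algebra -/

lemma softplus_pos (ρ : ℝ) : 0 < softplus ρ :=
  Real.log_pos (by linarith [Real.exp_pos ρ])

lemma contDiff_softplus {n : WithTop ℕ∞} : ContDiff ℝ n softplus := by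
  unfold softplus
  exact (contDiff_const.add Real.contDiff_exp).log (fun x => by positivity)

/-- The autonomous differential equation `g' = 1 - e^{-g}`. -/
lemma hasDerivAt_softplus (ρ : ℝ) :
    HasDerivAt softplus (1 - Real.exp (-softplus ρ)) ρ := by
  have h := ((Real.hasDerivAt_exp ρ).const_add 1).log (by positivity)
  refine h.congr_deriv ?_
  have hp : 0 < 1 + Real.exp ρ := by positivity
  rw [softplus, Real.exp_neg, Real.exp_log hp]
  field_simp
  ring

/-- `u = e^{-g}`, one minus the derivative of `g`. -/
noncomputable def spU (ρ : ℝ) : ℝ := Real.exp (-softplus ρ)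

/-- `p = g e^{-g}`. -/
noncomputable def spP (ρ : ℝ) : ℝ := softplus ρ * Real.exp (-softplus ρ)

/-- `r = (1 - e^{-g}) / g`, the logarithmic derivative of `g`. -/
noncomputable def spR (ρ : ℝ) : ℝ := (1 - Real.exp (-softplus ρ)) / softplus ρ

lemma hasDerivAt_spU (ρ : ℝ) : HasDerivAt spU (-(spU ρ * (1 - spU ρ))) ρ := by
  have h := (hasDerivAt_softplus ρ).neg.exp
  refine h.congr_deriv ?_
  simp only [spU, Pi.neg_apply]
  ring

lemma hasDerivAt_spP (ρ : ℝ) :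
    HasDerivAt spP ((1 - spU ρ) * (spU ρ - spP ρ)) ρ := by
  have h := (hasDerivAt_softplus ρ).mul (hasDerivAt_spU ρ)
  refine h.congr_deriv ?_
  simp only [spU, spP]
  ring

lemma hasDerivAt_spR (ρ : ℝ) :
    HasDerivAt spR (spU ρ * spR ρ - spR ρ * spR ρ) ρ := by
  have h := ((hasDerivAt_spU ρ).const_sub 1).div (hasDerivAt_softplus ρ) (softplus_pos ρ).ne'
  refine h.congr_deriv ?_
  have := (softplus_pos ρ).ne'
  simp only [spU, spR]
  field_simp

lemma abs_spU_le (ρ : ℝ) : |spU ρ| ≤ 1 := by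
  have := softplus_pos ρ
  rw [spU, abs_of_pos (Real.exp_pos _)]
  exact Real.exp_le_one_iff.2 (by linarith)

lemma abs_spP_le (ρ : ℝ) : |spP ρ| ≤ 1 := by
  have h := softplus_pos ρ
  rw [spP, abs_of_pos (by positivity), Real.exp_neg, ← div_eq_mul_inv,
    div_le_one (Real.exp_pos _)]
  linarith [Real.add_one_le_exp (softplus ρ)]

lemma abs_spR_le (ρ : ℝ) : |spR ρ| ≤ 1 := by
  have h := softplus_pos ρ
  have h1 : Real.exp (-softplus ρ) ≤ 1 := Real.exp_le_one_iff.2 (by linarith)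
  rw [spR, abs_of_nonneg (div_nonneg (by linarith) h.le), div_le_one h]
  linarith [Real.add_one_le_exp (-softplus ρ)]

/-- The algebra of functions generated by `u`, `p` and `r`. -/
noncomputable def softplusAlgebra : Subalgebra ℝ (ℝ → ℝ) :=
  Algebra.adjoin ℝ {spU, spP, spR}

lemma spU_mem : spU ∈ softplusAlgebra := Algebra.subset_adjoin (by simp)
lemma spP_mem : spP ∈ softplusAlgebra := Algebra.subset_adjoin (by simp)
lemma spR_mem : spR ∈ softplusAlgebra := Algebra.subset_adjoin (by simp)

/-- Elements of the algebra are bounded, and the algebra is closed under differentiation. -/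
lemma softplusAlgebra_closed {f : ℝ → ℝ} (hf : f ∈ softplusAlgebra) :
    (∃ C, ∀ x, |f x| ≤ C) ∧ ∃ f' ∈ softplusAlgebra, ∀ x, HasDerivAt f (f' x) x := by
  induction hf using Algebra.adjoin_induction with
  | mem f hf =>
    rcases hf with rfl | rfl | rfl
    · exact ⟨⟨1, abs_spU_le⟩, -(spU * (1 - spU)),
        neg_mem (mul_mem spU_mem (sub_mem (one_mem _) spU_mem)), hasDerivAt_spU⟩
    · exact ⟨⟨1, abs_spP_le⟩, (1 - spU) * (spU - spP),
        mul_mem (sub_mem (one_mem _) spU_mem) (sub_mem spU_mem spP_mem), hasDerivAt_spP⟩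
    · exact ⟨⟨1, abs_spR_le⟩, spU * spR - spR * spR,
        sub_mem (mul_mem spU_mem spR_mem) (mul_mem spR_mem spR_mem), hasDerivAt_spR⟩
  | algebraMap c =>
    exact ⟨⟨|c|, fun x => le_rfl⟩, 0, zero_mem _, fun x => hasDerivAt_const x c⟩
  | add f k hf hk ihf ihk =>
    obtain ⟨⟨A, hA⟩, f', hf', hdf⟩ := ihf
    obtain ⟨⟨B, hB⟩, k', hk', hdk⟩ := ihk
    exact ⟨⟨A + B, fun x => (abs_add_le _ _).trans (add_le_add (hA x) (hB x))⟩,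
      f' + k', add_mem hf' hk', fun x => (hdf x).add (hdk x)⟩
  | mul f k hf hk ihf ihk =>
    obtain ⟨⟨A, hA⟩, f', hf', hdf⟩ := ihf
    obtain ⟨⟨B, hB⟩, k', hk', hdk⟩ := ihk
    refine ⟨⟨A * B, fun x => ?_⟩, f' * k + f * k',
      add_mem (mul_mem hf' hk) (mul_mem hf hk'), fun x => (hdf x).mul (hdk x)⟩
    rw [Pi.mul_apply, abs_mul]
    exact mul_le_mul (hA x) (hB x) (abs_nonneg _) ((abs_nonneg _).trans (hA x))

lemma iteratedDeriv_mem_softplusAlgebra (n : ℕ) {f : ℝ → ℝ} (hf : f ∈ softplusAlgebra) :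
    iteratedDeriv n f ∈ softplusAlgebra := by
  induction n generalizing f with
  | zero => simpa using hf
  | succ n ih =>
    obtain ⟨f', hf', hd⟩ := (softplusAlgebra_closed hf).2
    rw [iteratedDeriv_succ', funext fun x => (hd x).deriv]
    exact ih hf'

/-! ### The two summands of the divergence -/

/-- All derivatives of order at least two of `a g² + c - b log g` are bounded. -/
lemma softplus_part_bound (a b c : ℝ) (n : ℕ) :
    ∃ C, ∀ x, ‖iteratedDeriv (n + 2)
      (fun ρ => a * softplus ρ ^ 2 + c - b * Real.log (softplus ρ)) x‖ ≤ C := by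
  have h1 : deriv (fun ρ => a * softplus ρ ^ 2 + c - b * Real.log (softplus ρ))
      = fun ρ => 2 * a * (softplus ρ * (1 - spU ρ)) - b * spR ρ := by
    ext x
    have h := ((((hasDerivAt_softplus x).pow 2).const_mul a).add_const c).sub
      (((hasDerivAt_softplus x).log (softplus_pos x).ne').const_mul b)
    refine HasDerivAt.deriv (h.congr_deriv ?_)
    simp only [spU, spR]
    push_cast
    ring
  have h2 : deriv (fun ρ => 2 * a * (softplus ρ * (1 - spU ρ)) - b * spR ρ)
      = (2 * a) • ((1 - spU) * (1 - spU) + spP * (1 - spU))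
        - b • (spU * spR - spR * spR) := by
    ext x
    have h := (((hasDerivAt_softplus x).mul ((hasDerivAt_spU x).const_sub 1)).const_mul
      (2 * a)).sub ((hasDerivAt_spR x).const_mul b)
    refine HasDerivAt.deriv (h.congr_deriv ?_)
    simp only [spU, spR, spP, Pi.sub_apply, Pi.add_apply, Pi.mul_apply, Pi.smul_apply,
      Pi.one_apply, smul_eq_mul]
    ring
  rw [iteratedDeriv_succ', iteratedDeriv_succ', h1, h2]
  have hv : (1 - spU) ∈ softplusAlgebra := sub_mem (one_mem _) spU_mem
  exact (softplusAlgebra_closed (iteratedDeriv_mem_softplusAlgebra n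
    (sub_mem (Subalgebra.smul_mem _ (add_mem (mul_mem hv hv) (mul_mem spP_mem hv)) _)
      (Subalgebra.smul_mem _ (sub_mem (mul_mem spU_mem spR_mem)
        (mul_mem spR_mem spR_mem)) _)))).1

/-- The squared norm has constant second derivative, hence bounded derivatives of all orders at
least two. -/
lemma norm_sq_bound {E : Type*} [NormedAddCommGroup E] [InnerProductSpace ℝ E] (n : ℕ) :
    ∃ C, ∀ x : E, ‖iteratedFDeriv ℝ (n + 2) (fun y : E => ‖y‖ ^ 2) x‖ ≤ C := by
  have h1 : fderiv ℝ (fun y : E => ‖y‖ ^ 2) = ⇑((2 : ℝ) • innerSL ℝ (E := E)) := by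
    ext x y
    simp [fderiv_norm_sq_apply]
  have h2 : fderiv ℝ (⇑((2 : ℝ) • innerSL ℝ (E := E)))
      = fun _ => (2 : ℝ) • innerSL ℝ (E := E) := by
    ext1 x
    exact ContinuousLinearMap.fderiv _
  simp_rw [← norm_iteratedFDeriv_fderiv, h1, h2]
  rcases eq_or_ne n 0 with rfl | hn
  · exact ⟨_, fun x => by rw [norm_iteratedFDeriv_zero]⟩
  · exact ⟨0, fun x => by rw [iteratedFDeriv_const_of_ne hn]; simp⟩

lemma scaled_norm_sq_bound {E : Type*} [NormedAddCommGroup E] [InnerProductSpace ℝ E]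
    (b : ℝ) (m₀ : E) (n : ℕ) :
    ∃ C, ∀ x : E, ‖iteratedFDeriv ℝ (n + 2) (fun y : E => b • ‖y - m₀‖ ^ 2) x‖ ≤ C := by
  obtain ⟨B, hB⟩ := norm_sq_bound (E := E) n
  refine ⟨‖b‖ * B, fun x => ?_⟩
  have hs : ContDiff ℝ (n + 2 : ℕ) (fun y : E => ‖y - m₀‖ ^ 2) :=
    (contDiff_id.sub contDiff_const).norm_sq ℝ
  have hsub := iteratedFDeriv_comp_sub (𝕜 := ℝ) (f := fun y : E => ‖y‖ ^ 2) (n + 2) m₀ x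
  rw [iteratedFDeriv_const_smul_apply' hs.contDiffAt, norm_smul, hsub]
  exact mul_le_mul_of_nonneg_left (hB _) (norm_nonneg _)

/-- Composition with a linear map of norm at most one does not increase the norm of iterated
derivatives. -/
lemma norm_iteratedFDeriv_comp_contraction_le {E F G : Type*}
    [NormedAddCommGroup E] [NormedSpace ℝ E]
    [NormedAddCommGroup F] [NormedSpace ℝ F] [NormedAddCommGroup G] [NormedSpace ℝ G]
    {n : ℕ} {f : F → G} (hf : ContDiff ℝ n f) (L : E →L[ℝ] F) (hL : ‖L‖ ≤ 1) (x : E) :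
    ‖iteratedFDeriv ℝ n (f ∘ L) x‖ ≤ ‖iteratedFDeriv ℝ n f (L x)‖ := by
  rw [L.iteratedFDeriv_comp_right hf x le_rfl]
  refine (ContinuousMultilinearMap.norm_compContinuousLinearMap_le _ _).trans ?_
  refine mul_le_of_le_one_right (norm_nonneg _) ?_
  exact Finset.prod_le_one (fun _ _ => norm_nonneg _) fun _ _ => hL

lemma norm_iteratedFDeriv_fst_add_snd_le {E : Type*} [NormedAddCommGroup E] [NormedSpace ℝ E]
    {n : ℕ} {q : E → ℝ} {h : ℝ → ℝ} (hq : ContDiff ℝ n q) (hh : ContDiff ℝ n h) {B A : ℝ}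
    (hB : ∀ x, ‖iteratedFDeriv ℝ n q x‖ ≤ B) (hA : ∀ x, ‖iteratedDeriv n h x‖ ≤ A) (θ : E × ℝ) :
    ‖iteratedFDeriv ℝ n (q ∘ ContinuousLinearMap.fst ℝ E ℝ + h ∘ ContinuousLinearMap.snd ℝ E ℝ) θ‖
      ≤ B + A := by
  have hq' : ContDiff ℝ n (q ∘ ContinuousLinearMap.fst ℝ E ℝ) :=
    hq.comp (ContinuousLinearMap.contDiff _)
  have hh' : ContDiff ℝ n (h ∘ ContinuousLinearMap.snd ℝ E ℝ) :=
    hh.comp (ContinuousLinearMap.contDiff _)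
  rw [iteratedFDeriv_add_apply hq'.contDiffAt hh'.contDiffAt]
  refine (norm_add_le _ _).trans (add_le_add ?_ ?_)
  · exact (norm_iteratedFDeriv_comp_contraction_le hq (ContinuousLinearMap.fst ℝ E ℝ)
      (ContinuousLinearMap.norm_fst_le ..) θ).trans (hB _)
  · have := norm_iteratedFDeriv_comp_contraction_le hh (ContinuousLinearMap.snd ℝ E ℝ)
      (ContinuousLinearMap.norm_snd_le ..) θ
    rw [norm_iteratedFDeriv_eq_norm_iteratedDeriv] at this
    exact this.trans (hA _)

/-- A bounded second derivative forces at most linear growth of the first. -/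
lemma gradient_bound {E : Type*} [NormedAddCommGroup E] [NormedSpace ℝ E] {f : E → ℝ}
    (hf : ContDiff ℝ (⊤ : ℕ∞) f) {C : ℝ} (hC : 0 < C)
    (hbd : ∀ x, ‖iteratedFDeriv ℝ 2 f x‖ ≤ C) :
    ∃ C > 0, ∀ x, ‖fderiv ℝ f x‖ ≤ C * (1 + ‖x‖) := by
  refine ⟨C + ‖fderiv ℝ f 0‖, by positivity, fun θ => ?_⟩
  have hdiff : Differentiable ℝ (fderiv ℝ f) :=
    (hf.fderiv_right (m := 1) (by
      rw [one_add_one_eq_two]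
      exact WithTop.coe_le_coe.2 le_top)).differentiable one_ne_zero
  have hmv : ‖fderiv ℝ f θ - fderiv ℝ f 0‖ ≤ C * ‖θ - 0‖ := by
    refine Convex.norm_image_sub_le_of_norm_fderiv_le (𝕜 := ℝ) (fun x _ => hdiff x)
      (fun x _ => ?_) convex_univ (Set.mem_univ _) (Set.mem_univ _)
    rw [← norm_iteratedFDeriv_one, norm_iteratedFDeriv_fderiv]
    exact hbd x
  rw [sub_zero] at hmv
  have htri := norm_le_norm_sub_add (fderiv ℝ f θ) (fderiv ℝ f 0)
  nlinarith [mul_nonneg (norm_nonneg (fderiv ℝ f 0)) (norm_nonneg θ)]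

/-! ### The divergence -/

/-- The closed-form KL divergence
`D(m, ρ) = ‖m − m₀‖²/(2σ₀²) + (d/2)(g(ρ)²/σ₀² − 1) + (d/2)·log(σ₀²/g(ρ)²)` is `C^∞`,
its gradient grows at most linearly (`‖∇D(θ)‖ ≤ C(1 + ‖θ‖)`), and all its iterated
derivatives of order `n ≥ 2` are bounded. -/
theorem kl_derivative_bounds (d : ℕ) (hd : 1 ≤ d) (m₀ : EuclideanSpace ℝ (Fin d))
    (σ₀ : ℝ) (hσ₀ : 0 < σ₀) (D : EuclideanSpace ℝ (Fin d) × ℝ → ℝ)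
    (hD : ∀ (m : EuclideanSpace ℝ (Fin d)) (ρ : ℝ),
      D (m, ρ) = ‖m - m₀‖ ^ 2 / (2 * σ₀ ^ 2)
        + (d / 2 : ℝ) * (softplus ρ ^ 2 / σ₀ ^ 2 - 1)
        + (d / 2 : ℝ) * Real.log (σ₀ ^ 2 / softplus ρ ^ 2)) :
    ContDiff ℝ (⊤ : ℕ∞) D ∧
      (∃ C > 0, ∀ θ : EuclideanSpace ℝ (Fin d) × ℝ,
        ‖fderiv ℝ D θ‖ ≤ C * (1 + ‖θ‖)) ∧
      (∀ n : ℕ, 2 ≤ n → ∃ C > 0, ∀ θ : EuclideanSpace ℝ (Fin d) × ℝ,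
        ‖iteratedFDeriv ℝ n D θ‖ ≤ C) := by
  set a : ℝ := d / 2 / σ₀ ^ 2 with ha
  set c : ℝ := d / 2 * Real.log (σ₀ ^ 2) - d / 2 with hc
  set h : ℝ → ℝ := fun ρ => a * softplus ρ ^ 2 + c - d * Real.log (softplus ρ) with hh
  set q : EuclideanSpace ℝ (Fin d) → ℝ := fun m => (1 / (2 * σ₀ ^ 2)) • ‖m - m₀‖ ^ 2 with hq
  have hDeq : D = q ∘ ContinuousLinearMap.fst ℝ _ _ + h ∘ ContinuousLinearMap.snd ℝ _ _ := by
    ext ⟨m, ρ⟩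
    have hg := softplus_pos ρ
    rw [hD, Real.log_div (by positivity) (by positivity), Real.log_pow (softplus ρ)]
    simp only [hq, hh, ha, hc, Pi.add_apply, Function.comp_apply, ContinuousLinearMap.coe_fst',
      ContinuousLinearMap.coe_snd', smul_eq_mul]
    push_cast
    field_simp
    ring
  have hhs : ContDiff ℝ (⊤ : ℕ∞) h :=
    ((contDiff_const.mul (contDiff_softplus.pow 2)).add contDiff_const).sub
      (contDiff_const.mul (contDiff_softplus.log fun x => (softplus_pos x).ne'))
  have hq0 : ContDiff ℝ (⊤ : ℕ∞) (fun m : EuclideanSpace ℝ (Fin d) => ‖m - m₀‖ ^ 2) :=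
    (contDiff_id.sub contDiff_const).norm_sq ℝ
  have hqs : ContDiff ℝ (⊤ : ℕ∞) q := hq0.const_smul _
  have hDs : ContDiff ℝ (⊤ : ℕ∞) D := by
    rw [hDeq]
    exact (hqs.comp (ContinuousLinearMap.contDiff _)).add
      (hhs.comp (ContinuousLinearMap.contDiff _))
  have hle : ∀ n : ℕ, (n : WithTop ℕ∞) ≤ ((⊤ : ℕ∞) : WithTop ℕ∞) := fun n => by
    exact_mod_cast le_top
  have hB : ∀ n : ℕ, 2 ≤ n → ∃ C > 0, ∀ θ : EuclideanSpace ℝ (Fin d) × ℝ,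
      ‖iteratedFDeriv ℝ n D θ‖ ≤ C := by
    intro n hn
    obtain ⟨k, rfl⟩ := Nat.exists_eq_add_of_le' hn
    obtain ⟨A, hA⟩ := softplus_part_bound a d c k
    obtain ⟨B, hqB⟩ := scaled_norm_sq_bound (1 / (2 * σ₀ ^ 2)) m₀ k
    have hqk : ContDiff ℝ ((k + 2 : ℕ) : WithTop ℕ∞) q := hqs.of_le (hle _)
    have hhk : ContDiff ℝ ((k + 2 : ℕ) : WithTop ℕ∞) h := hhs.of_le (hle _)
    have key : ∀ θ, ‖iteratedFDeriv ℝ (k + 2) D θ‖ ≤ B + A := by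
      rw [hDeq]
      exact norm_iteratedFDeriv_fst_add_snd_le hqk hhk hqB hA
    exact ⟨max (B + A) 1, by positivity,
      fun θ => (key θ).trans (le_max_left _ _)⟩
  refine ⟨hDs, ?_, hB⟩
  obtain ⟨C, hC, hbd⟩ := hB 2 le_rfl
  exact gradient_bound hDs hC hbd
end

section
/- Let D : ℝ → ℝ be twice continuously differentiable and let c > 0 be such that |D'(θ)| ≤ c(1 + |θ|) and |D''(θ)| ≤ c for all θ ∈ ℝ. Then there exists a constant C > 0, depending only on c, such that for every smooth compactly supported function Ψ : ℝ → ℝ, | ∫_ℝ Ψ'(θ)·D'(θ)·Ψ(θ)/(1 + θ²) dθ + ∫_ℝ (Ψ'·D')'(θ)·Ψ'(θ)/(1 + θ²) dθ | ≤ C·( ∫_ℝ Ψ(θ)²/(1 + θ²) dθ + ∫_ℝ Ψ'(θ)²/(1 + θ²) dθ ). -/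
/-!
Both integrals are controlled by one estimate, `abs_integral_deriv_mul_le`. With the weight
`w = 1/(1+θ²)`, the product `u' E u w` is half the derivative of `u² E w` minus half of
`u² (E w)'`. The first part integrates to zero by compact support, and `(E w)'` is bounded by
`4 c w`, because the linear growth of `E` is compensated by the decay `|w'| = 2|θ| w²`.
Take `E = D'`. The choice `u = Ψ` bounds the first integral by `2c ∫ Ψ² w`. The product rule
splits the second integral into the same expression with `u = Ψ'` and the term `∫ D'' Ψ'² w`,
which is at most `c ∫ Ψ'² w`; hence `C = 3c` works.
-/

open MeasureTheory

/-- Integration by parts estimate: a coefficient `E` of linear growth with bounded derivative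
costs no derivative of `u` in the quadratic form `∫ u' E u / (1 + θ²)`. -/
lemma abs_integral_deriv_mul_le {c : ℝ} {E u : ℝ → ℝ} (hE : ContDiff ℝ 1 E)
    (hE0 : ∀ θ, |E θ| ≤ c * (1 + |θ|)) (hE1 : ∀ θ, |deriv E θ| ≤ c)
    (hu : ContDiff ℝ 1 u) (hs : HasCompactSupport u) :
    |∫ θ, deriv u θ * E θ * u θ / (1 + θ ^ 2)| ≤ 2 * c * ∫ θ, u θ ^ 2 / (1 + θ ^ 2) := by
  have hne : ∀ θ : ℝ, (1 + θ ^ 2) ≠ 0 := fun θ => by positivity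
  have cu := hu.continuous
  have cE := hE.continuous
  have cu' := hu.continuous_deriv le_rfl
  have cE' := hE.continuous_deriv le_rfl
  have vanish : ∀ θ, θ ∉ tsupport u → u θ = 0 := fun θ h => image_eq_zero_of_notMem_tsupport h
  have integrable_of : ∀ f : ℝ → ℝ, Continuous f → (∀ θ, u θ = 0 → f θ = 0) → Integrable f :=
    fun f hf h0 => hf.integrable_of_hasCompactSupport
      (HasCompactSupport.intro hs fun θ h => h0 θ (vanish θ h))
  -- `g = -u² (E w)'`, written over the common denominator.
  set g : ℝ → ℝ := fun θ =>
    -(u θ ^ 2 * (deriv E θ * (1 + θ ^ 2) - E θ * (2 * θ)) / (1 + θ ^ 2) ^ 2) with hg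
  have ig : Integrable g := integrable_of g
    (by rw [hg]; exact (Continuous.div (by fun_prop) (by fun_prop)
      (fun θ => pow_ne_zero 2 (hne θ))).neg) (fun θ h => by simp [hg, h])
  have iP : Integrable (fun θ => deriv u θ * E θ * u θ / (1 + θ ^ 2)) :=
    integrable_of _ (Continuous.div (by fun_prop) (by fun_prop) hne) (fun θ h => by simp [h])
  have iQ : Integrable (fun θ => u θ ^ 2 / (1 + θ ^ 2)) :=
    integrable_of _ (Continuous.div (by fun_prop) (by fun_prop) hne) (fun θ h => by simp [h])
  have iF : Integrable (fun θ => u θ ^ 2 * E θ / (1 + θ ^ 2)) :=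
    integrable_of _ (Continuous.div (by fun_prop) (by fun_prop) hne) (fun θ h => by simp [h])
  have hF : ∀ θ, HasDerivAt (fun θ => u θ ^ 2 * E θ / (1 + θ ^ 2))
      (2 * (deriv u θ * E θ * u θ / (1 + θ ^ 2)) - g θ) θ := by
    intro θ
    have du : HasDerivAt u (deriv u θ) θ := (hu.differentiable one_ne_zero θ).hasDerivAt
    have dE : HasDerivAt E (deriv E θ) θ := (hE.differentiable one_ne_zero θ).hasDerivAt
    have dw : HasDerivAt (fun θ : ℝ => 1 + θ ^ 2) (2 * θ) θ := by
      simpa using (hasDerivAt_pow 2 θ).const_add 1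
    refine (((du.pow 2).mul dE).div dw (hne θ)).congr_deriv ?_
    have := hne θ
    simp only [hg, Pi.mul_apply, Pi.pow_apply]
    field_simp
    push_cast
    ring
  have h0 : ∫ θ, (2 * (deriv u θ * E θ * u θ / (1 + θ ^ 2)) - g θ) = 0 :=
    integral_eq_zero_of_hasDerivAt_of_integrable hF ((iP.const_mul 2).sub ig) iF
  rw [integral_sub (iP.const_mul 2) ig, integral_const_mul] at h0
  have hgb : ∀ θ, ‖g θ‖ ≤ 4 * c * (u θ ^ 2 / (1 + θ ^ 2)) := by
    intro θ
    have hp : 0 < 1 + θ ^ 2 := by positivity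
    have hc : 0 ≤ c := (abs_nonneg _).trans (hE1 θ)
    have key : |deriv E θ * (1 + θ ^ 2) - E θ * (2 * θ)| ≤ 4 * c * (1 + θ ^ 2) := by
      have h1 : |deriv E θ * (1 + θ ^ 2)| ≤ c * (1 + θ ^ 2) := by
        rw [abs_mul, abs_of_pos hp]
        exact mul_le_mul_of_nonneg_right (hE1 θ) hp.le
      have h2 : |E θ * (2 * θ)| ≤ c * (1 + |θ|) * (2 * |θ|) := by
        rw [abs_mul, abs_mul, abs_two]
        exact mul_le_mul_of_nonneg_right (hE0 θ) (by positivity)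
      -- `2|θ|(1+|θ|) ≤ 3(1+θ²)` since `(1-|θ|)² ≥ 0`.
      have h3 : (1 + |θ|) * (2 * |θ|) ≤ 3 * (1 + θ ^ 2) := by
        nlinarith [sq_nonneg (1 - |θ|), sq_abs θ]
      have h4 := mul_le_mul_of_nonneg_left h3 hc
      have h5 := abs_sub (deriv E θ * (1 + θ ^ 2)) (E θ * (2 * θ))
      linarith
    rw [hg, Real.norm_eq_abs, abs_neg, abs_div, abs_mul, abs_of_nonneg (sq_nonneg (u θ)),
      abs_of_pos (pow_pos hp 2), div_le_iff₀ (pow_pos hp 2)]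
    calc u θ ^ 2 * |deriv E θ * (1 + θ ^ 2) - E θ * (2 * θ)|
        ≤ u θ ^ 2 * (4 * c * (1 + θ ^ 2)) := mul_le_mul_of_nonneg_left key (sq_nonneg _)
      _ = 4 * c * (u θ ^ 2 / (1 + θ ^ 2)) * (1 + θ ^ 2) ^ 2 := by field_simp
  have hle := norm_integral_le_of_norm_le (iQ.const_mul (4 * c)) (Filter.Eventually.of_forall hgb)
  rw [integral_const_mul, Real.norm_eq_abs] at hle
  have h6 := abs_le.mp hle
  rw [abs_le]
  constructor <;> linarith

/-- Weighted Sobolev `H^{1,1}` bound for the operator `Ψ ↦ Ψ'·D'`: if `D` is `C²` with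
`|D'(θ)| ≤ c(1+|θ|)` and `|D''(θ)| ≤ c`, then there is a constant `C > 0`, depending
only on `c`, such that for all smooth compactly supported `Ψ`,
`|∫ Ψ' D' Ψ/(1+θ²) + ∫ (Ψ' D')' Ψ'/(1+θ²)| ≤ C(∫ Ψ²/(1+θ²) + ∫ Ψ'²/(1+θ²))`. -/
theorem weighted_sobolev_bound (c : ℝ) (hc : 0 < c) :
    ∃ C > 0, ∀ D : ℝ → ℝ, ContDiff ℝ 2 D →
      (∀ θ : ℝ, |deriv D θ| ≤ c * (1 + |θ|)) →
      (∀ θ : ℝ, |deriv (deriv D) θ| ≤ c) →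
      ∀ Ψ : ℝ → ℝ, ContDiff ℝ (⊤ : ℕ∞) Ψ → HasCompactSupport Ψ →
        |(∫ θ : ℝ, deriv Ψ θ * deriv D θ * Ψ θ / (1 + θ ^ 2)) +
            ∫ θ : ℝ, deriv (fun t => deriv Ψ t * deriv D t) θ * deriv Ψ θ / (1 + θ ^ 2)| ≤
          C * ((∫ θ : ℝ, Ψ θ ^ 2 / (1 + θ ^ 2)) +
            ∫ θ : ℝ, deriv Ψ θ ^ 2 / (1 + θ ^ 2)) := by
  refine ⟨3 * c, by positivity, fun D hD hD1 hD2 Ψ hΨ hs => ?_⟩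
  have hne : ∀ θ : ℝ, (1 + θ ^ 2) ≠ 0 := fun θ => by positivity
  have hE : ContDiff ℝ 1 (deriv D) :=
    (contDiff_succ_iff_deriv (n := 1).mp (by simpa [one_add_one_eq_two] using hD)).2.2
  have hΨ2 : ContDiff ℝ 2 Ψ := by exact_mod_cast contDiff_infty.mp hΨ 2
  have hu : ContDiff ℝ 1 (deriv Ψ) :=
    (contDiff_succ_iff_deriv (n := 1).mp (by simpa [one_add_one_eq_two] using hΨ2)).2.2
  have hus : HasCompactSupport (deriv Ψ) := hs.deriv
  have b1 := abs_integral_deriv_mul_le hE hD1 hD2 (hΨ2.of_le one_le_two) hs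
  have b2 := abs_integral_deriv_mul_le hE hD1 hD2 hu hus
  have cu := hu.continuous
  have cE := hE.continuous
  have cu' := hu.continuous_deriv le_rfl
  have cE' := hE.continuous_deriv le_rfl
  have integrable_of : ∀ f : ℝ → ℝ, Continuous f → (∀ θ, deriv Ψ θ = 0 → f θ = 0) →
      Integrable f :=
    fun f hf h0 => hf.integrable_of_hasCompactSupport
      (HasCompactSupport.intro hus fun θ h => h0 θ (image_eq_zero_of_notMem_tsupport h))
  have i1 : Integrable (fun θ => deriv (deriv Ψ) θ * deriv D θ * deriv Ψ θ / (1 + θ ^ 2)) :=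
    integrable_of _ (Continuous.div (by fun_prop) (by fun_prop) hne) (fun θ h => by simp [h])
  have i2 : Integrable (fun θ => deriv (deriv D) θ * (deriv Ψ θ ^ 2 / (1 + θ ^ 2))) :=
    integrable_of _ (cE'.mul (Continuous.div (by fun_prop) (by fun_prop) hne))
      (fun θ h => by simp [h])
  have i3 : Integrable (fun θ => deriv Ψ θ ^ 2 / (1 + θ ^ 2)) :=
    integrable_of _ (Continuous.div (by fun_prop) (by fun_prop) hne) (fun θ h => by simp [h])
  have split : (∫ θ : ℝ, deriv (fun t => deriv Ψ t * deriv D t) θ * deriv Ψ θ / (1 + θ ^ 2)) =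
      (∫ θ, deriv (deriv Ψ) θ * deriv D θ * deriv Ψ θ / (1 + θ ^ 2)) +
        ∫ θ, deriv (deriv D) θ * (deriv Ψ θ ^ 2 / (1 + θ ^ 2)) := by
    rw [← integral_add i1 i2]
    congr 1
    ext θ
    rw [deriv_fun_mul (hu.differentiable one_ne_zero θ) (hE.differentiable one_ne_zero θ)]
    ring
  have b3 : ‖∫ θ, deriv (deriv D) θ * (deriv Ψ θ ^ 2 / (1 + θ ^ 2))‖ ≤
      ∫ θ, c * (deriv Ψ θ ^ 2 / (1 + θ ^ 2)) := by
    refine norm_integral_le_of_norm_le (i3.const_mul c) (Filter.Eventually.of_forall fun θ => ?_)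
    have hq : 0 ≤ deriv Ψ θ ^ 2 / (1 + θ ^ 2) := by positivity
    rw [norm_mul, Real.norm_of_nonneg hq]
    exact mul_le_mul_of_nonneg_right (hD2 θ) hq
  rw [integral_const_mul, Real.norm_eq_abs] at b3
  have hA : 0 ≤ ∫ θ : ℝ, Ψ θ ^ 2 / (1 + θ ^ 2) := integral_nonneg fun θ => by positivity
  have hcA := mul_nonneg hc.le hA
  rw [split]
  have h1 := abs_le.mp b1
  have h2 := abs_le.mp b2
  have h3 := abs_le.mp b3
  rw [abs_le]
  constructor <;> linarith
end
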